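/- arXiv:2508.06273 — 2 statements merged into one kernel-verified Lean document; each statement's English description precedes it below -/
import Mathlib

section
/- Let m be a positive integer and let A, B : ℝ^m → (m×m real matrices) be twice continuously differentiable. Let u : ℝ² × ℝ → ℝ^m be three times continuously differentiable on a neighbourhood of the point (x̄, ȳ, t_n) and satisfy the quasilinear system ∂_t u + A(u) ∂_x u + B(u) ∂_y u = 0 there. For each τ ∈ (0, τ₀] let v_τ : ℝ² × ℝ → ℝ^m be three times continuously differentiable on a neighbourhood of {(x̄,ȳ)} × [t_n, t_n+τ₀], solve the constant-coefficient linear system ∂_t v + Ã_τ ∂_x v + B̃_τ ∂_y v = 0 with Ã_τ = A(u(x̄,ȳ,t_n+τ/2)) and B̃_τ = B(u(x̄,ȳ,t_n+τ/2)), and satisfy v_τ(x,y,t_n) = u(x,y,t_n) for all (x,y) in a neighbourhood of (x̄,ȳ); assume moreover that all partial derivatives of the family {v_τ} up to order three are bounded uniformly in τ on this neighbourhood. Then there exist constants C > 0 and τ₁ ∈ (0, τ₀] such that for all τ ∈ (0, τ₁]: ‖ v_τ(x̄,ȳ,t_n+τ) + (τ²/2)·[ A(u)(DA(u)[∂_x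 u])∂_x u + A(u)(DB(u)[∂_x u])∂_y u + B(u)(DA(u)[∂_y u])∂_x u + B(u)(DB(u)[∂_y u])∂_y u ]|_{(x̄,ȳ,t_n)} − u(x̄,ȳ,t_n+τ) ‖ ≤ C τ³. -/
/-!
Both `u` and `v_τ` are Taylor-expanded in time at `z₀ = (xb, yb, tn)`, with third-order remainders
that are `O(τ³)` (`taylor_three`); uniformity in `τ` for `v_τ` comes from the bound on its third
derivatives. The equation and the symmetry of second derivatives turn `∂ₜ∂ₜ` into spatial
derivatives (`dirD_tt`); this is used for `u` and, with constant coefficients, for `v_τ`. Spatial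
derivatives of `v_τ` and `u` agree at `z₀` since the two functions agree on the slice `t = tn`
(`dirD_eventuallyEq`).

With `Ã = A(u₀) + (τ/2) DA(u₀)[∂ₜu] + O(τ²)` (`taylor_two`), and likewise for `B̃`, the terms
`DA[∂ₜu]∂ₓu + DB[∂ₜu]∂_y u` arising from `τ ∂ₜ v_τ` cancel against those in `(τ²/2) ∂ₜ∂ₜ u`, the pure
second-order terms agree up to `O(τ³)`, and what is left is the quadratic correction.
Matrices are treated as continuous linear maps through `mvecL`, so that the main computation
(`linearisation_abstract`) takes place in a normed space.
-/

/-- Partial derivative in the `x`-direction of a function of `(x, y, t) : ℝ × ℝ × ℝ`. -/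
noncomputable def pdx {E : Type*} [NormedAddCommGroup E] [NormedSpace ℝ E]
    (f : ℝ × ℝ × ℝ → E) (z : ℝ × ℝ × ℝ) : E := fderiv ℝ f z ((1:ℝ), (0:ℝ), (0:ℝ))

/-- Partial derivative in the `y`-direction. -/
noncomputable def pdy {E : Type*} [NormedAddCommGroup E] [NormedSpace ℝ E]
    (f : ℝ × ℝ × ℝ → E) (z : ℝ × ℝ × ℝ) : E := fderiv ℝ f z ((0:ℝ), (1:ℝ), (0:ℝ))

/-- Partial derivative in the `t`-direction. -/
noncomputable def pdt {E : Type*} [NormedAddCommGroup E] [NormedSpace ℝ E]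
    (f : ℝ × ℝ × ℝ → E) (z : ℝ × ℝ × ℝ) : E := fderiv ℝ f z ((0:ℝ), (0:ℝ), (1:ℝ))

/-- Matrix–vector multiplication for an `m × m` matrix given as `Fin m → Fin m → ℝ`. -/
def mvec {m : ℕ} (M : Fin m → Fin m → ℝ) (x : Fin m → ℝ) : Fin m → ℝ :=
  fun i => ∑ j, M i j * x j

open Set Filter Topology Asymptotics

/-! ### Directional derivatives -/

section Calculus

variable {P E : Type*} [NormedAddCommGroup P] [NormedSpace ℝ P]
  [NormedAddCommGroup E] [NormedSpace ℝ E]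

/-- The derivative of `F` in the fixed direction `e`, as a function of the base point. -/
noncomputable def dirD (e : P) (F : P → E) (z : P) : E := fderiv ℝ F z e

lemma dirD_contDiffOn {Ω : Set P} (hΩ : IsOpen Ω) {F : P → E} {n k : WithTop ℕ∞}
    (hF : ContDiffOn ℝ k F Ω) (h : n + 1 ≤ k) (e : P) : ContDiffOn ℝ n (dirD e F) Ω :=
  (hF.fderiv_of_isOpen hΩ h).clm_apply contDiffOn_const

lemma dirD_diffAt {Ω : Set P} (hΩ : IsOpen Ω) {F : P → E}
    (hF : ContDiffOn ℝ 2 F Ω) (e : P) {z : P} (hz : z ∈ Ω) : DifferentiableAt ℝ (dirD e F) z :=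
  ((dirD_contDiffOn (n := 1) hΩ hF (by norm_num) e).contDiffAt (hΩ.mem_nhds hz)).differentiableAt
    (by norm_num)

lemma dirD_dirD {Ω : Set P} (hΩ : IsOpen Ω) {F : P → E}
    (hF : ContDiffOn ℝ 2 F Ω) (a b : P) {z : P} (hz : z ∈ Ω) :
    dirD a (dirD b F) z = fderiv ℝ (fderiv ℝ F) z a b := by
  have h1 : DifferentiableAt ℝ (fderiv ℝ F) z :=
    ((hF.fderiv_of_isOpen (m := 1) hΩ (by norm_num)).contDiffAt
      (hΩ.mem_nhds hz)).differentiableAt (by norm_num)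
  have h2 := h1.hasFDerivAt.clm_apply (hasFDerivAt_const b z)
  have h3 : dirD b F = fun z => fderiv ℝ F z b := rfl
  rw [h3, dirD, h2.fderiv]
  simp

lemma dirD_comm {Ω : Set P} (hΩ : IsOpen Ω) {F : P → E}
    (hF : ContDiffOn ℝ 2 F Ω) (a b : P) {z : P} (hz : z ∈ Ω) :
    dirD a (dirD b F) z = dirD b (dirD a F) z := by
  rw [dirD_dirD hΩ hF a b hz, dirD_dirD hΩ hF b a hz]
  exact ((hF.contDiffAt (hΩ.mem_nhds hz)).isSymmSndFDerivAt (by simp)) a b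

/-- The iterated Fréchet derivative evaluated at `(e, e, e)` is the third iterate of `dirD e`, so a
bound on the former bounds the latter. -/
lemma dirD_three_norm_le {Ω : Set P} (hΩ : IsOpen Ω) {F : P → E}
    (hF : ContDiffOn ℝ 3 F Ω) (e : P) (he : ‖e‖ ≤ 1) {z : P} (hz : z ∈ Ω) {K : ℝ}
    (hK : ‖iteratedFDerivWithin ℝ 3 F Ω z‖ ≤ K) :
    ‖dirD e (dirD e (dirD e F)) z‖ ≤ K := by
  have step : ∀ n : ℕ, n ≤ 3 → ∀ w ∈ Ω,
      iteratedFDeriv ℝ n F w (fun _ => e) = ((dirD e)^[n] F) w := by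
    intro n
    induction n with
    | zero => intro _ w _; simp
    | succ n ih =>
      intro hn w hw
      have hd : DifferentiableAt ℝ (iteratedFDeriv ℝ n F) w :=
        (hF.contDiffAt (hΩ.mem_nhds hw)).differentiableAt_iteratedFDeriv
          (by exact_mod_cast hn)
      rw [Function.iterate_succ_apply', iteratedFDeriv_succ_apply_left]
      have heq : ((dirD e)^[n] F) =ᶠ[𝓝 w] fun y => iteratedFDeriv ℝ n F y (fun _ => e) := by
        filter_upwards [hΩ.mem_nhds hw] with y hy using (ih (by omega) y hy).symm
      rw [dirD, heq.fderiv_eq]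
      have := ((ContinuousMultilinearMap.apply ℝ (fun _ : Fin n => P) E
        (fun _ => e)).hasFDerivAt.comp w hd.hasFDerivAt).fderiv
      have h4 : (fun y => iteratedFDeriv ℝ n F y (fun _ => e)) =
        (ContinuousMultilinearMap.apply ℝ (fun _ : Fin n => P) E (fun _ => e)) ∘
          iteratedFDeriv ℝ n F := rfl
      rw [h4, this]
      rfl
  have h3 := step 3 le_rfl z hz
  change _ = dirD e (dirD e (dirD e F)) z at h3
  rw [← h3]
  rw [iteratedFDerivWithin_of_isOpen 3 hΩ hz] at hK
  have h5 : ‖e‖ ^ 3 ≤ 1 := pow_le_one₀ (norm_nonneg _) he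
  refine ((iteratedFDeriv ℝ 3 F z).le_opNorm _).trans ?_
  simp only [Finset.prod_const, Finset.card_univ, Fintype.card_fin]
  nlinarith [norm_nonneg (iteratedFDeriv ℝ 3 F z)]

/-! ### Taylor expansion along a line -/

lemma taylor_one {g g1 : ℝ → E} {τ K : ℝ} (hτ : 0 ≤ τ)
    (h0 : ∀ s ∈ Icc 0 τ, HasDerivAt g (g1 s) s) (hK : ∀ s ∈ Icc 0 τ, ‖g1 s‖ ≤ K) :
    ‖g τ - g 0‖ ≤ K * τ := by
  have := norm_image_sub_le_of_norm_deriv_le_segment' (f := g) (f' := g1) (a := 0) (b := τ)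
    (C := K) (fun s hs => (h0 s hs).hasDerivWithinAt) (fun s hs => hK s (Ico_subset_Icc_self hs))
    τ ⟨hτ, le_rfl⟩
  simpa using this

lemma taylor_two {g g1 g2 : ℝ → E} {τ K : ℝ} (hτ : 0 ≤ τ)
    (h0 : ∀ s ∈ Icc 0 τ, HasDerivAt g (g1 s) s) (h1 : ∀ s ∈ Icc 0 τ, HasDerivAt g1 (g2 s) s)
    (hK : ∀ s ∈ Icc 0 τ, ‖g2 s‖ ≤ K) :
    ‖g τ - g 0 - τ • g1 0‖ ≤ K * τ ^ 2 := by
  have hK0 : 0 ≤ K := (norm_nonneg _).trans (hK 0 ⟨le_rfl, hτ⟩)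
  have := taylor_one (g := fun s => g s - s • g1 0) (g1 := fun s => g1 s - g1 0)
    (K := K * τ) hτ
    (fun s hs => by simpa using (h0 s hs).fun_sub ((hasDerivAt_id s).smul_const (g1 0)))
    (fun s hs => (taylor_one hs.1 (fun r hr => h1 r ⟨hr.1, hr.2.trans hs.2⟩)
      (fun r hr => hK r ⟨hr.1, hr.2.trans hs.2⟩)).trans
        (mul_le_mul_of_nonneg_left hs.2 hK0))
  convert this using 1
  · congr 1; simp; abel
  · ring

lemma taylor_three {g g1 g2 g3 : ℝ → E} {τ K : ℝ} (hτ : 0 ≤ τ)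
    (h0 : ∀ s ∈ Icc 0 τ, HasDerivAt g (g1 s) s) (h1 : ∀ s ∈ Icc 0 τ, HasDerivAt g1 (g2 s) s)
    (h2 : ∀ s ∈ Icc 0 τ, HasDerivAt g2 (g3 s) s)
    (hK : ∀ s ∈ Icc 0 τ, ‖g3 s‖ ≤ K) :
    ‖g τ - g 0 - τ • g1 0 - (τ ^ 2 / 2) • g2 0‖ ≤ K * τ ^ 3 := by
  have hK0 : 0 ≤ K := (norm_nonneg _).trans (hK 0 ⟨le_rfl, hτ⟩)
  have := taylor_one (g := fun s => g s - s • g1 0 - (s ^ 2 / 2) • g2 0)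
    (g1 := fun s => g1 s - g1 0 - s • g2 0)
    (K := K * τ ^ 2) hτ
    (fun s hs => by
      have hq : HasDerivAt (fun s : ℝ => s ^ 2 / 2) s s := by
        simpa using (hasDerivAt_pow 2 s).div_const 2
      simpa using ((h0 s hs).fun_sub ((hasDerivAt_id s).smul_const (g1 0))).fun_sub
        (hq.smul_const (g2 0)))
    (fun s hs => (taylor_two hs.1 (fun r hr => h1 r ⟨hr.1, hr.2.trans hs.2⟩)
      (fun r hr => h2 r ⟨hr.1, hr.2.trans hs.2⟩)
      (fun r hr => hK r ⟨hr.1, hr.2.trans hs.2⟩)).trans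
        (mul_le_mul_of_nonneg_left (pow_le_pow_left₀ hs.1 hs.2 2) hK0))
  convert this using 1
  · congr 1; simp; abel
  · ring

lemma hasDerivAt_line {F : P → E} (z e : P) (s : ℝ) (hF : DifferentiableAt ℝ F (z + s • e)) :
    HasDerivAt (fun s : ℝ => F (z + s • e)) (dirD e F (z + s • e)) s := by
  have h1 : HasDerivAt (fun s : ℝ => z + s • e) e s := by
    simpa using ((hasDerivAt_id s).smul_const e).const_add z
  exact hF.hasFDerivAt.comp_hasDerivAt s h1

lemma taylor_line_three {Ω : Set P} (hΩ : IsOpen Ω) {F : P → E} (hF : ContDiffOn ℝ 3 F Ω)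
    {z e : P} {τ K : ℝ} (hτ : 0 ≤ τ) (hs : ∀ s ∈ Icc 0 τ, z + s • e ∈ Ω)
    (hK : ∀ s ∈ Icc 0 τ, ‖dirD e (dirD e (dirD e F)) (z + s • e)‖ ≤ K) :
    ‖F (z + τ • e) - F z - τ • dirD e F z - (τ ^ 2 / 2) • dirD e (dirD e F) z‖ ≤ K * τ ^ 3 := by
  have hF1 := dirD_contDiffOn (n := 2) hΩ hF (by norm_num) e
  have := taylor_three hτ
    (fun s h => hasDerivAt_line z e s ((hF.contDiffAt (hΩ.mem_nhds (hs s h))).differentiableAt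
      (by norm_num)))
    (fun s h => hasDerivAt_line z e s (dirD_diffAt hΩ (hF.of_le (by norm_num)) e (hs s h)))
    (fun s h => hasDerivAt_line z e s (dirD_diffAt hΩ hF1 e (hs s h))) hK
  simpa using this

lemma taylor_line_two {Ω : Set P} (hΩ : IsOpen Ω) {F : P → E} (hF : ContDiffOn ℝ 2 F Ω)
    {z e : P} {τ K : ℝ} (hτ : 0 ≤ τ) (hs : ∀ s ∈ Icc 0 τ, z + s • e ∈ Ω)
    (hK : ∀ s ∈ Icc 0 τ, ‖dirD e (dirD e F) (z + s • e)‖ ≤ K) :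
    ‖F (z + τ • e) - F z - τ • dirD e F z‖ ≤ K * τ ^ 2 := by
  have := taylor_two hτ
    (fun s h => hasDerivAt_line z e s ((hF.contDiffAt (hΩ.mem_nhds (hs s h))).differentiableAt
      (by norm_num)))
    (fun s h => hasDerivAt_line z e s (dirD_diffAt hΩ hF e (hs s h))) hK
  simpa using this

/-- A function continuous at `z` is bounded, by a constant depending only on the function, along
short forward segments from `z`, which moreover stay in a given neighbourhood of `z`. -/
lemma line_bound {Ω : Set P} {z e : P} (hz : Ω ∈ 𝓝 z) {E' : Type*} [SeminormedAddCommGroup E']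
    {G : P → E'} (hG : ContinuousAt G z) :
    ∀ᶠ τ in 𝓝[>] (0 : ℝ), ∀ s ∈ Icc 0 τ,
      z + s • e ∈ Ω ∧ ‖G (z + s • e)‖ ≤ ‖G z‖ + 1 := by
  have h1 : ∀ᶠ w in 𝓝 z, w ∈ Ω ∧ ‖G w‖ ≤ ‖G z‖ + 1 := by
    filter_upwards [hz, hG.norm.eventually_lt_const (lt_add_one ‖G z‖)] with w a b
      using ⟨a, b.le⟩
  have hc : Tendsto (fun s : ℝ => z + s • e) (𝓝 0) (𝓝 z) := by
    have : Continuous (fun s : ℝ => z + s • e) := by fun_prop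
    simpa using this.tendsto 0
  obtain ⟨ε, hε, hb⟩ := Metric.eventually_nhds_iff.1 (hc.eventually h1)
  filter_upwards [Ioo_mem_nhdsGT hε] with τ hτ s hs
  apply hb
  rw [Real.dist_eq, sub_zero, abs_of_nonneg hs.1]
  exact hs.2.trans_lt hτ.2

lemma taylor_isBigO_three {Ω : Set P} (hΩ : IsOpen Ω) {F : P → E} (hF : ContDiffOn ℝ 3 F Ω)
    {z : P} (hz : z ∈ Ω) (e : P) :
    (fun τ : ℝ => F (z + τ • e) - F z - τ • dirD e F z - (τ ^ 2 / 2) • dirD e (dirD e F) z)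
      =O[𝓝[>] 0] fun τ => τ ^ 3 := by
  have hF1 := dirD_contDiffOn (n := 2) hΩ hF (by norm_num) e
  have hF2 := dirD_contDiffOn (n := 1) hΩ hF1 (by norm_num) e
  have hF3 := dirD_contDiffOn (n := 0) hΩ hF2 (by norm_num) e
  have hc := hF3.continuousOn.continuousAt (hΩ.mem_nhds hz)
  refine IsBigO.of_bound (‖dirD e (dirD e (dirD e F)) z‖ + 1) ?_
  filter_upwards [line_bound (e := e) (hΩ.mem_nhds hz) hc, self_mem_nhdsWithin] with τ hb hτ
  have hτ' : 0 ≤ τ := le_of_lt hτ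
  rw [Real.norm_of_nonneg (pow_nonneg hτ' 3)]
  exact taylor_line_three hΩ hF hτ' (fun s h => (hb s h).1) (fun s h => (hb s h).2)

lemma taylor_isBigO_two {Ω : Set P} (hΩ : IsOpen Ω) {F : P → E} (hF : ContDiffOn ℝ 2 F Ω)
    {z : P} (hz : z ∈ Ω) (e : P) :
    (fun τ : ℝ => F (z + τ • e) - F z - τ • dirD e F z) =O[𝓝[>] 0] fun τ => τ ^ 2 := by
  have hF1 := dirD_contDiffOn (n := 1) hΩ hF (by norm_num) e
  have hF2 := dirD_contDiffOn (n := 0) hΩ hF1 (by norm_num) e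
  have hc := hF2.continuousOn.continuousAt (hΩ.mem_nhds hz)
  refine IsBigO.of_bound (‖dirD e (dirD e F) z‖ + 1) ?_
  filter_upwards [line_bound (e := e) (hΩ.mem_nhds hz) hc, self_mem_nhdsWithin] with τ hb hτ
  have hτ' : 0 ≤ τ := le_of_lt hτ
  rw [Real.norm_of_nonneg (pow_nonneg hτ' 2)]
  exact taylor_line_two hΩ hF hτ' (fun s h => (hb s h).1) (fun s h => (hb s h).2)

/-! ### Consequences of the initial data and of the equation -/

/-- If two functions agree near `z` on a set `H` invariant under translation by multiples of `e`,
then so do their derivatives in the direction `e`. -/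
lemma dirD_eventuallyEq {H : Set P} {e z : P} (hH : ∀ w ∈ H, ∀ s : ℝ, w + s • e ∈ H)
    {F G : P → E} (hFG : F =ᶠ[𝓝[H] z] G)
    (hF : ∀ᶠ w in 𝓝 z, DifferentiableAt ℝ F w) (hG : ∀ᶠ w in 𝓝 z, DifferentiableAt ℝ G w) :
    dirD e F =ᶠ[𝓝[H] z] dirD e G := by
  filter_upwards [eventually_eventually_nhdsWithin.2 hFG, hF.filter_mono nhdsWithin_le_nhds,
    hG.filter_mono nhdsWithin_le_nhds, self_mem_nhdsWithin] with w h1 h2 h3 hw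
  have hc : Tendsto (fun s : ℝ => w + s • e) (𝓝 0) (𝓝[H] w) := by
    refine tendsto_nhdsWithin_iff.2 ⟨?_, Eventually.of_forall fun s => hH w hw s⟩
    have : Continuous (fun s : ℝ => w + s • e) := by fun_prop
    simpa using this.tendsto 0
  have h4 : (fun s : ℝ => F (w + s • e)) =ᶠ[𝓝 0] fun s => G (w + s • e) := hc.eventually h1
  have h5 := hasDerivAt_line w e 0 (F := F) (by simpa using h2)
  have h6 := hasDerivAt_line w e 0 (F := G) (by simpa using h3)
  simpa using h5.unique (h6.congr_of_eventuallyEq h4)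

/-- Differentiating `∂ₜ u = -𝒜(u) ∂ₓ u - ℬ(u) ∂_y u` in a direction `e`. -/
lemma dirD_pde {Ω : Set P} (hΩ : IsOpen Ω) {u : P → E} (hu : ContDiffOn ℝ 2 u Ω)
    {𝒜 ℬ : E → E →L[ℝ] E} (hA : Differentiable ℝ 𝒜) (hB : Differentiable ℝ ℬ) {x y t : P}
    (hpde : ∀ z ∈ Ω, dirD t u z + 𝒜 (u z) (dirD x u z) + ℬ (u z) (dirD y u z) = 0)
    (e : P) {z : P} (hz : z ∈ Ω) :
    dirD e (dirD t u) z = -(fderiv ℝ 𝒜 (u z) (dirD e u z) (dirD x u z)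
      + 𝒜 (u z) (dirD e (dirD x u) z) + fderiv ℝ ℬ (u z) (dirD e u z) (dirD y u z)
      + ℬ (u z) (dirD e (dirD y u) z)) := by
  have heq : dirD t u =ᶠ[𝓝 z] fun z => -(𝒜 (u z) (dirD x u z) + ℬ (u z) (dirD y u z)) := by
    filter_upwards [hΩ.mem_nhds hz] with w hw
    rw [eq_neg_iff_add_eq_zero, ← add_assoc]
    exact hpde w hw
  have hud : HasFDerivAt u (fderiv ℝ u z) z :=
    ((hu.contDiffAt (hΩ.mem_nhds hz)).differentiableAt (by norm_num)).hasFDerivAt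
  have hAc := (hA (u z)).hasFDerivAt.comp z hud
  have hBc := (hB (u z)).hasFDerivAt.comp z hud
  have h1 := ((hAc.clm_apply (dirD_diffAt hΩ hu x hz).hasFDerivAt).add
    (hBc.clm_apply (dirD_diffAt hΩ hu y hz).hasFDerivAt)).neg
  have h2 := (h1.congr_of_eventuallyEq heq).fderiv
  rw [dirD, h2]
  simp [dirD]
  abel

/-- The second time derivative of a solution in terms of first derivatives and second spatial
derivatives. -/
lemma dirD_tt {Ω : Set P} (hΩ : IsOpen Ω) {u : P → E} (hu : ContDiffOn ℝ 2 u Ω)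
    {𝒜 ℬ : E → E →L[ℝ] E} (hA : Differentiable ℝ 𝒜) (hB : Differentiable ℝ ℬ) {x y t : P}
    (hpde : ∀ z ∈ Ω, dirD t u z + 𝒜 (u z) (dirD x u z) + ℬ (u z) (dirD y u z) = 0)
    {z : P} (hz : z ∈ Ω) :
    dirD t (dirD t u) z =
      𝒜 (u z) (fderiv ℝ 𝒜 (u z) (dirD x u z) (dirD x u z)
        + 𝒜 (u z) (dirD x (dirD x u) z) + fderiv ℝ ℬ (u z) (dirD x u z) (dirD y u z)
        + ℬ (u z) (dirD x (dirD y u) z))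
      + ℬ (u z) (fderiv ℝ 𝒜 (u z) (dirD y u z) (dirD x u z)
        + 𝒜 (u z) (dirD y (dirD x u) z) + fderiv ℝ ℬ (u z) (dirD y u z) (dirD y u z)
        + ℬ (u z) (dirD y (dirD y u) z))
      - fderiv ℝ 𝒜 (u z) (dirD t u z) (dirD x u z)
      - fderiv ℝ ℬ (u z) (dirD t u z) (dirD y u z) := by
  rw [dirD_pde hΩ hu hA hB hpde t hz, dirD_comm hΩ hu t x hz, dirD_comm hΩ hu t y hz,
    dirD_pde hΩ hu hA hB hpde x hz, dirD_pde hΩ hu hA hB hpde y hz, map_neg, map_neg]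
  abel

/-! ### The error expansion -/

/-- The expansion for operator-valued coefficients. `H` plays the role of the initial time slice:
it is invariant under translation in the spatial directions `x` and `y`. -/
theorem linearisation_abstract {𝒜 ℬ : E → E →L[ℝ] E} (hA : ContDiff ℝ 2 𝒜) (hB : ContDiff ℝ 2 ℬ)
    {x y t z : P} (ht : ‖t‖ ≤ 1) {H : Set P} (hx : ∀ w ∈ H, ∀ s : ℝ, w + s • x ∈ H)
    (hy : ∀ w ∈ H, ∀ s : ℝ, w + s • y ∈ H) (hzH : z ∈ H) {u : P → E}
    {Ω : Set P} (hΩ : IsOpen Ω) (hz : z ∈ Ω) (hu : ContDiffOn ℝ 3 u Ω)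
    (hpde : ∀ z ∈ Ω, dirD t u z + 𝒜 (u z) (dirD x u z) + ℬ (u z) (dirD y u z) = 0)
    {V : ℝ → P → E} {Ω' : Set P} (hΩ' : IsOpen Ω') {τ₀ : ℝ} (hτ₀ : 0 < τ₀)
    (hseg : ∀ s ∈ Icc 0 τ₀, z + s • t ∈ Ω')
    (hV : ∀ τ ∈ Ioc 0 τ₀, ContDiffOn ℝ 3 (V τ) Ω')
    (hVpde : ∀ τ ∈ Ioc 0 τ₀, ∀ w ∈ Ω', dirD t (V τ) w
      + 𝒜 (u (z + (τ / 2) • t)) (dirD x (V τ) w) + ℬ (u (z + (τ / 2) • t)) (dirD y (V τ) w) = 0)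
    (hinit : ∀ τ ∈ Ioc 0 τ₀, V τ =ᶠ[𝓝[H] z] u) {M : ℝ}
    (hM : ∀ τ ∈ Ioc 0 τ₀, ∀ w ∈ Ω', ‖iteratedFDerivWithin ℝ 3 (V τ) Ω' w‖ ≤ M) :
    (fun τ : ℝ => V τ (z + τ • t) + (τ ^ 2 / 2) • (
        𝒜 (u z) (fderiv ℝ 𝒜 (u z) (dirD x u z) (dirD x u z))
        + 𝒜 (u z) (fderiv ℝ ℬ (u z) (dirD x u z) (dirD y u z))
        + ℬ (u z) (fderiv ℝ 𝒜 (u z) (dirD y u z) (dirD x u z))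
        + ℬ (u z) (fderiv ℝ ℬ (u z) (dirD y u z) (dirD y u z))) - u (z + τ • t))
      =O[𝓝[>] 0] fun τ => τ ^ 3 := by
  have hz' : z ∈ Ω' := by simpa using hseg 0 ⟨le_rfl, hτ₀.le⟩
  have hu2 : ContDiffOn ℝ 2 u Ω := hu.of_le (by norm_num)
  have hAd := hA.differentiable (by norm_num)
  have hBd := hB.differentiable (by norm_num)
  have hudz : DifferentiableAt ℝ u z :=
    (hu.contDiffAt (hΩ.mem_nhds hz)).differentiableAt (by norm_num)
  have hIoc : ∀ᶠ τ in 𝓝[>] (0 : ℝ), τ ∈ Ioc 0 τ₀ := Ioc_mem_nhdsGT hτ₀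
  have hhalf : Tendsto (fun τ : ℝ => τ / 2) (𝓝[>] 0) (𝓝[>] 0) := by
    refine tendsto_nhdsWithin_iff.2 ⟨?_, ?_⟩
    · have : Continuous (fun τ : ℝ => τ / 2) := by fun_prop
      simpa using (this.tendsto 0).mono_left nhdsWithin_le_nhds
    · filter_upwards [self_mem_nhdsWithin] with τ hτ using mem_Ioi.2 (half_pos (mem_Ioi.1 hτ))
  -- A frozen coefficient, evaluated at time `tn + τ / 2`, is expanded to first order in `τ`; the
  -- factor `τ` comes from the term `τ ∂ₜ v_τ` in which it occurs.
  have coeff : ∀ 𝒞 : E → E →L[ℝ] E, ContDiff ℝ 2 𝒞 → ∀ p : E,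
      (fun τ : ℝ => τ • (𝒞 (u (z + (τ / 2) • t)) p - 𝒞 (u z) p
        - (τ / 2) • fderiv ℝ 𝒞 (u z) (dirD t u z) p)) =O[𝓝[>] 0] fun τ => τ ^ 3 := by
    intro 𝒞 hC p
    have h1 := (taylor_isBigO_two hΩ (hC.comp_contDiffOn hu2) hz t).comp_tendsto hhalf
    have h2 : dirD t (𝒞 ∘ u) z = fderiv ℝ 𝒞 (u z) (dirD t u z) := by
      rw [dirD, fderiv_comp z ((hC.differentiable (by norm_num)) _) hudz]
      rfl
    have h3 := ((ContinuousLinearMap.apply ℝ E p).isBigO_comp _ _).trans h1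
    have h4 := (isBigO_refl (fun τ : ℝ => τ) (𝓝[>] 0)).smul h3
    refine (h4.congr_left fun τ => ?_).trans ?_
    · simp [h2]
    · refine IsBigO.of_bound 1 (Eventually.of_forall fun τ => ?_)
      simp only [Function.comp, norm_smul, norm_pow, norm_div, Real.norm_eq_abs]
      have := abs_nonneg τ
      rw [div_pow]
      norm_num
      rw [← sq_abs]
      nlinarith [pow_nonneg this 3]
  -- The pure second-order part of `∂ₜ∂ₜ v_τ` at `z`.
  let S : ℝ → E := fun τ =>
    𝒜 (u (z + (τ / 2) • t)) (𝒜 (u (z + (τ / 2) • t)) (dirD x (dirD x u) z)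
      + ℬ (u (z + (τ / 2) • t)) (dirD x (dirD y u) z))
    + ℬ (u (z + (τ / 2) • t)) (𝒜 (u (z + (τ / 2) • t)) (dirD y (dirD x u) z)
      + ℬ (u (z + (τ / 2) • t)) (dirD y (dirD y u) z))
  have hS : (fun τ : ℝ => (τ ^ 2 / 2) • (S τ - S 0)) =O[𝓝[>] 0] fun τ => τ ^ 3 := by
    have hline : DifferentiableAt ℝ (fun τ : ℝ => u (z + (τ / 2) • t)) 0 := by
      refine DifferentiableAt.comp (g := u) (f := fun τ : ℝ => z + (τ / 2) • t) 0 ?_ (by fun_prop)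
      simpa using hudz
    have hcA : DifferentiableAt ℝ (fun τ : ℝ => 𝒜 (u (z + (τ / 2) • t))) 0 :=
      (hAd _).comp (0 : ℝ) hline
    have hcB : DifferentiableAt ℝ (fun τ : ℝ => ℬ (u (z + (τ / 2) • t))) 0 :=
      (hBd _).comp (0 : ℝ) hline
    have hSd : DifferentiableAt ℝ S 0 := by
      have k := fun p : E => differentiableAt_const (𝕜 := ℝ) (x := (0 : ℝ)) p
      exact (hcA.clm_apply ((hcA.clm_apply (k _)).add (hcB.clm_apply (k _)))).add
        (hcB.clm_apply ((hcA.clm_apply (k _)).add (hcB.clm_apply (k _))))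
    have h1 : (fun τ : ℝ => S τ - S 0) =O[𝓝[>] 0] fun τ : ℝ => τ := by
      simpa using hSd.isBigO_sub.mono (nhdsWithin_le_nhds (s := Ioi 0))
    have h2 : (fun τ : ℝ => τ ^ 2 / 2) =O[𝓝[>] 0] fun τ : ℝ => τ ^ 2 := by
      refine IsBigO.of_bound 1 (Eventually.of_forall fun τ => ?_)
      simp only [norm_div, norm_pow, Real.norm_eq_abs]
      norm_num
      exact sq_nonneg τ
    refine (h2.smul h1).trans (IsBigO.of_bound 1 (Eventually.of_forall fun τ => ?_))
    simp only [smul_eq_mul]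
    rw [← pow_succ, one_mul]
  have hRV : (fun τ : ℝ => V τ (z + τ • t) - V τ z - τ • dirD t (V τ) z
      - (τ ^ 2 / 2) • dirD t (dirD t (V τ)) z) =O[𝓝[>] 0] fun τ => τ ^ 3 := by
    refine IsBigO.of_bound M ?_
    filter_upwards [hIoc] with τ hτ
    rw [Real.norm_of_nonneg (pow_nonneg hτ.1.le 3)]
    have hs : ∀ s ∈ Icc 0 τ, z + s • t ∈ Ω' := fun s h => hseg s ⟨h.1, h.2.trans hτ.2⟩
    exact taylor_line_three hΩ' (hV τ hτ) hτ.1.le hs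
      (fun s h => dirD_three_norm_le hΩ' (hV τ hτ) t ht (hs s h) (hM τ hτ _ (hs s h)))
  have hRu := taylor_isBigO_three hΩ hu hz t
  refine ((((hRV.sub hRu).sub (coeff 𝒜 hA (dirD x u z))).sub
    (coeff ℬ hB (dirD y u z))).add hS).congr' ?_ EventuallyEq.rfl
  filter_upwards [hIoc] with τ hτ
  have hV2 : ContDiffOn ℝ 2 (V τ) Ω' := (hV τ hτ).of_le (by norm_num)
  have d0 : ∀ {Ω : Set P} (_ : IsOpen Ω) (_ : z ∈ Ω) {F : P → E} (_ : ContDiffOn ℝ 2 F Ω),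
      ∀ᶠ w in 𝓝 z, DifferentiableAt ℝ F w := fun hO hzO F hF => by
    filter_upwards [hO.mem_nhds hzO] with w hw
    exact (hF.contDiffAt (hO.mem_nhds hw)).differentiableAt (by norm_num)
  have d1 : ∀ {Ω : Set P} (_ : IsOpen Ω) (_ : z ∈ Ω) {F : P → E} (_ : ContDiffOn ℝ 2 F Ω) (e : P),
      ∀ᶠ w in 𝓝 z, DifferentiableAt ℝ (dirD e F) w := fun hO hzO F hF e => by
    filter_upwards [hO.mem_nhds hzO] with w hw using dirD_diffAt hO hF e hw
  have ev := hinit τ hτ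
  have ex := dirD_eventuallyEq hx ev (d0 hΩ' hz' hV2) (d0 hΩ hz hu2)
  have ey := dirD_eventuallyEq hy ev (d0 hΩ' hz' hV2) (d0 hΩ hz hu2)
  have exx := dirD_eventuallyEq hx ex (d1 hΩ' hz' hV2 x) (d1 hΩ hz hu2 x)
  have exy := dirD_eventuallyEq hx ey (d1 hΩ' hz' hV2 y) (d1 hΩ hz hu2 y)
  have eyx := dirD_eventuallyEq hy ex (d1 hΩ' hz' hV2 x) (d1 hΩ hz hu2 x)
  have eyy := dirD_eventuallyEq hy ey (d1 hΩ' hz' hV2 y) (d1 hΩ hz hu2 y)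
  have hVtt := dirD_tt hΩ' hV2 (𝒜 := fun _ => 𝒜 (u (z + (τ / 2) • t)))
    (ℬ := fun _ => ℬ (u (z + (τ / 2) • t))) (differentiable_const _) (differentiable_const _)
    (hVpde τ hτ) hz'
  simp only [fderiv_fun_const, Pi.zero_apply, zero_apply, zero_add, add_zero,
    sub_zero, exx.self_of_nhdsWithin hzH, exy.self_of_nhdsWithin hzH,
    eyx.self_of_nhdsWithin hzH, eyy.self_of_nhdsWithin hzH] at hVtt
  have hVt : dirD t (V τ) z = -(𝒜 (u (z + (τ / 2) • t)) (dirD x u z)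
      + ℬ (u (z + (τ / 2) • t)) (dirD y u z)) := by
    have := hVpde τ hτ z hz'
    rw [ex.self_of_nhdsWithin hzH, ey.self_of_nhdsWithin hzH, add_assoc] at this
    exact eq_neg_of_add_eq_zero_left this
  have hut : dirD t u z = -(𝒜 (u z) (dirD x u z) + ℬ (u z) (dirD y u z)) := by
    have := hpde z hz
    rw [add_assoc] at this
    exact eq_neg_of_add_eq_zero_left this
  have hutt := dirD_tt hΩ hu2 hAd hBd hpde hz
  have hVtt' : dirD t (dirD t (V τ)) z = S τ := hVtt
  have hS0 : S 0 = 𝒜 (u z) (𝒜 (u z) (dirD x (dirD x u) z) + ℬ (u z) (dirD x (dirD y u) z))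
    + ℬ (u z) (𝒜 (u z) (dirD y (dirD x u) z) + ℬ (u z) (dirD y (dirD y u) z)) := by
    simp [S]
  rw [hVtt', hVt, hutt, hS0, ev.self_of_nhdsWithin hzH]
  -- `∂ₜ u` is kept opaque inside `D𝒜[∂ₜu]`, `Dℬ[∂ₜu]` and expanded only in the linear term.
  generalize fderiv ℝ 𝒜 (u z) (dirD t u z) (dirD x u z) = a1
  generalize fderiv ℝ ℬ (u z) (dirD t u z) (dirD y u z) = b1
  rw [hut]
  simp only [map_add]
  module

end Calculus

/-! ### Matrix coefficients -/

/-- `mvec` as a bounded bilinear map. -/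
noncomputable def mvecL (m : ℕ) :
    (Fin m → Fin m → ℝ) →L[ℝ] (Fin m → ℝ) →L[ℝ] (Fin m → ℝ) :=
  LinearMap.toContinuousLinearMap
    ((LinearMap.toContinuousLinearMap (𝕜 := ℝ) (E := Fin m → ℝ) (F' := Fin m → ℝ)).toLinearMap ∘ₗ
      LinearMap.mk₂ ℝ (mvec (m := m))
        (fun M N v => by ext i; simp [mvec, add_mul, Finset.sum_add_distrib])
        (fun c M v => by ext i; simp [mvec, mul_assoc, Finset.mul_sum])
        (fun M v w => by ext i; simp [mvec, mul_add, Finset.sum_add_distrib])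
        (fun c M v => by ext i; simp [mvec, Finset.mul_sum, mul_left_comm]))

lemma mvecL_apply {m : ℕ} (M : Fin m → Fin m → ℝ) (v : Fin m → ℝ) : mvecL m M v = mvec M v := rfl

lemma fderiv_mvecL {m : ℕ} {A : (Fin m → ℝ) → (Fin m → Fin m → ℝ)} (hA : ContDiff ℝ 2 A)
    (w p q : Fin m → ℝ) :
    fderiv ℝ (fun w => mvecL m (A w)) w p q = mvec (fderiv ℝ A w p) q := by
  have h := ((mvecL m).hasFDerivAt.comp w
    ((hA.differentiable (by norm_num)) w).hasFDerivAt).fderiv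
  have h2 : (fun w => mvecL m (A w)) = mvecL m ∘ A := rfl
  rw [h2, h]
  rfl

/-- One-step linearisation error of the quasilinear system
`∂ₜ u + A(u) ∂ₓ u + B(u) ∂_y u = 0` against the family of solutions `v_τ` of the
constant-coefficient systems linearised about `u(xb, yb, tₙ + τ/2)`: after adding the
explicit quadratic correction term, the difference at `(xb, yb, tₙ + τ)` is `O(τ³)`. -/
theorem linearisation_error_third_order
    (m : ℕ) (hm : 0 < m)
    (A B : (Fin m → ℝ) → (Fin m → Fin m → ℝ))
    (hA : ContDiff ℝ 2 A) (hB : ContDiff ℝ 2 B)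
    (u : ℝ × ℝ × ℝ → (Fin m → ℝ))
    (xb yb tn τ₀ : ℝ) (hτ₀ : 0 < τ₀)
    -- u is C³ on a neighbourhood of (xb, yb, tn) and solves the quasilinear system there
    (Ω : Set (ℝ × ℝ × ℝ)) (hΩ : IsOpen Ω) (hz₀ : (xb, yb, tn) ∈ Ω)
    (hu : ContDiffOn ℝ 3 u Ω)
    (hupde : ∀ z ∈ Ω, pdt u z + mvec (A (u z)) (pdx u z) + mvec (B (u z)) (pdy u z) = 0)
    -- the family v_τ of solutions of the constant-coefficient linearised systems
    (V : ℝ → ℝ × ℝ × ℝ → (Fin m → ℝ))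
    (Ω' : Set (ℝ × ℝ × ℝ)) (hΩ' : IsOpen Ω')
    (hseg : ∀ t ∈ Set.Icc tn (tn + τ₀), (xb, yb, t) ∈ Ω')
    (hV : ∀ τ ∈ Set.Ioc 0 τ₀, ContDiffOn ℝ 3 (V τ) Ω')
    (hVpde : ∀ τ ∈ Set.Ioc 0 τ₀, ∀ z ∈ Ω',
      pdt (V τ) z + mvec (A (u (xb, yb, tn + τ / 2))) (pdx (V τ) z)
        + mvec (B (u (xb, yb, tn + τ / 2))) (pdy (V τ) z) = 0)
    -- v_τ agrees with u at time tn on a spatial neighbourhood of (xb, yb)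
    (U : Set (ℝ × ℝ)) (hU : IsOpen U) (hxyU : (xb, yb) ∈ U)
    (hinit : ∀ τ ∈ Set.Ioc 0 τ₀, ∀ xy ∈ U, V τ (xy.1, xy.2, tn) = u (xy.1, xy.2, tn))
    -- derivatives of the family {v_τ} up to order three are bounded uniformly in τ
    (M : ℝ) (hbdd : ∀ τ ∈ Set.Ioc 0 τ₀, ∀ z ∈ Ω', ∀ i : ℕ, i ≤ 3 →
      ‖iteratedFDerivWithin ℝ i (V τ) Ω' z‖ ≤ M) :
    ∃ C > (0:ℝ), ∃ τ₁ ∈ Set.Ioc 0 τ₀, ∀ τ ∈ Set.Ioc 0 τ₁,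
      ‖V τ (xb, yb, tn + τ)
        + (τ ^ 2 / 2) • (
            mvec (A (u (xb, yb, tn)))
              (mvec (fderiv ℝ A (u (xb, yb, tn)) (pdx u (xb, yb, tn))) (pdx u (xb, yb, tn)))
          + mvec (A (u (xb, yb, tn)))
              (mvec (fderiv ℝ B (u (xb, yb, tn)) (pdx u (xb, yb, tn))) (pdy u (xb, yb, tn)))
          + mvec (B (u (xb, yb, tn)))
              (mvec (fderiv ℝ A (u (xb, yb, tn)) (pdy u (xb, yb, tn))) (pdx u (xb, yb, tn)))
          + mvec (B (u (xb, yb, tn)))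
              (mvec (fderiv ℝ B (u (xb, yb, tn)) (pdy u (xb, yb, tn))) (pdy u (xb, yb, tn))))
        - u (xb, yb, tn + τ)‖ ≤ C * τ ^ 3 := by
  have hline : ∀ s : ℝ, ((xb, yb, tn) : ℝ × ℝ × ℝ) + s • ((0 : ℝ), (0 : ℝ), (1 : ℝ))
      = (xb, yb, tn + s) := fun s => by simp
  have key := linearisation_abstract (P := ℝ × ℝ × ℝ) (E := Fin m → ℝ)
    (𝒜 := fun w => mvecL m (A w)) (ℬ := fun w => mvecL m (B w))
    ((mvecL m).contDiff.comp hA) ((mvecL m).contDiff.comp hB)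
    (x := (1, 0, 0)) (y := (0, 1, 0)) (t := (0, 0, 1)) (z := (xb, yb, tn))
    (by simp [Prod.norm_def]) (H := {w | w.2.2 = tn})
    (fun w hw s => by simpa using hw) (fun w hw s => by simpa using hw) rfl
    hΩ hz₀ hu hupde hΩ' hτ₀
    (fun s hs => by
      rw [hline]
      exact hseg _ ⟨by linarith [hs.1], by linarith [hs.2]⟩)
    hV
    (fun τ hτ w hw => by
      rw [hline]
      exact hVpde τ hτ w hw)
    (fun τ hτ => by
      have hU' : {w : ℝ × ℝ × ℝ | (w.1, w.2.1) ∈ U} ∈ 𝓝 (xb, yb, tn) :=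
        (hU.preimage (by fun_prop : Continuous fun w : ℝ × ℝ × ℝ => (w.1, w.2.1))).mem_nhds hxyU
      filter_upwards [nhdsWithin_le_nhds hU', self_mem_nhdsWithin] with w hw hwt
      obtain ⟨a, b, c⟩ := w
      obtain rfl : c = tn := hwt
      exact hinit τ hτ (a, b) hw)
    (fun τ hτ w hw => hbdd τ hτ w hw 3 le_rfl)
  simp only [hline, fderiv_mvecL hA, fderiv_mvecL hB, mvecL_apply] at key
  obtain ⟨C, hC, hb⟩ := key.exists_pos
  obtain ⟨ε, hε, hsub⟩ := mem_nhdsGT_iff_exists_Ioc_subset.1 hb.bound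
  refine ⟨C, hC, min ε τ₀, ⟨lt_min hε hτ₀, min_le_right _ _⟩, fun τ hτ => ?_⟩
  have := hsub ⟨hτ.1, hτ.2.trans (min_le_left _ _)⟩
  simp only [mem_ofPred_eq, Real.norm_of_nonneg (pow_nonneg hτ.1.le 3)] at this
  exact this
end

section
/- Let m be a positive integer, let A, B : ℝ^m → (m×m real matrices) be twice continuously differentiable, and let u : ℝ² × ℝ → ℝ^m be twice continuously differentiable on a neighbourhood of (x̄, ȳ, t_n) and satisfy ∂_t u + A(u) ∂_x u + B(u) ∂_y u = 0 there. For each τ ∈ (0, τ₀] let v_τ be a continuously differentiable solution of the constant-coefficient system ∂_t v + Ã_τ ∂_x v + B̃_τ ∂_y v = 0 with Ã_τ = A(u(x̄,ȳ,t_n+τ/2)), B̃_τ = B(u(x̄,ȳ,t_n+τ/2)) and v_τ(x,y,t_n) = u(x,y,t_n) on a neighbourhood of (x̄,ȳ). Write u₀ = u(x̄,ȳ,t_n), u_x = ∂_x u(x̄,ȳ,t_n), u_y = ∂_y u(x̄,ȳ,t_n). Then ∂_t(u − v_τ)(x̄,ȳ,t_n) = −(τ/2)·[ (DA(u₀)[A(u₀)u_x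 + B(u₀)u_y]) u_x + (DB(u₀)[A(u₀)u_x + B(u₀)u_y]) u_y ] + O(τ²) as τ → 0⁺; that is, there exist C > 0 and τ₁ ∈ (0,τ₀] such that for all τ ∈ (0,τ₁] the norm of the difference of the two sides is at most C τ². -/
/-- First-order Taylor expansion at `0`, to the right, with a quadratic remainder. -/
lemma taylor_one_right {E : Type*} [NormedAddCommGroup E] [NormedSpace ℝ E]
    {φ : ℝ → E} {d : E} (hφ : ContDiffAt ℝ 2 φ 0) (hd : HasDerivAt φ d 0) :
    ∃ C > (0:ℝ), ∃ δ > (0:ℝ), ∀ s ∈ Set.Icc 0 δ, ‖φ s - φ 0 - s • d‖ ≤ C * s ^ 2 := by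
  obtain ⟨N, hN, hφN⟩ := hφ.contDiffOn le_rfl (by simp)
  obtain ⟨ε, hε, hball⟩ := Metric.mem_nhds_iff.1 hN
  have hδ : (0:ℝ) < ε / 2 := by positivity
  have hsub : Set.Icc 0 (ε / 2) ⊆ N := fun s hs => hball (by
    rw [Metric.mem_ball, Real.dist_eq, sub_zero, abs_of_nonneg hs.1]
    linarith [hs.2])
  obtain ⟨C, hC⟩ := exists_taylor_mean_remainder_bound (n := 1) hδ.le
    (by norm_num; exact hφN.mono hsub)
  refine ⟨max C 1, by positivity, ε / 2, hδ, fun s hs => ?_⟩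
  have h := hC s hs
  rw [taylorWithinEval_succ, taylor_within_zero_eval, iteratedDerivWithin_one,
    hd.hasDerivWithinAt.derivWithin (uniqueDiffOn_Icc hδ 0 ⟨le_rfl, hδ.le⟩)] at h
  norm_num at h
  calc ‖φ s - φ 0 - s • d‖ = ‖φ s - (φ 0 + s • d)‖ := by rw [sub_sub]
    _ ≤ C * s ^ 2 := h
    _ ≤ max C 1 * s ^ 2 := by gcongr; exact le_max_left _ _

lemma mvec_neg {m : ℕ} (M : Fin m → Fin m → ℝ) (x : Fin m → ℝ) :
    mvec (-M) x = -mvec M x := by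
  ext i; simp [mvec]

lemma hasDerivAt_mvec {m : ℕ} {M : ℝ → Fin m → Fin m → ℝ} {M' : Fin m → Fin m → ℝ} {s : ℝ}
    (h : HasDerivAt M M' s) (x : Fin m → ℝ) :
    HasDerivAt (fun r => mvec (M r) x) (mvec M' x) s := by
  refine hasDerivAt_pi.2 fun i => HasDerivAt.fun_sum fun j _ => ?_
  exact (hasDerivAt_pi.1 (hasDerivAt_pi.1 h i) j).mul_const _

lemma contDiffAt_mvec {m : ℕ} {M : ℝ → Fin m → Fin m → ℝ} {s : ℝ}
    (h : ContDiffAt ℝ 2 M s) (x : Fin m → ℝ) :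
    ContDiffAt ℝ 2 (fun r => mvec (M r) x) s := by
  refine contDiffAt_pi.2 fun i => ContDiffAt.sum fun j _ => ?_
  exact (contDiffAt_pi.1 (contDiffAt_pi.1 h i) j).mul contDiffAt_const

/-- The derivative of `f` at `z` in the direction `w` depends only on the values of `f` on the
line through `z` in that direction, near `z`. -/
lemma fderiv_apply_eq_of_line {E F : Type*} [NormedAddCommGroup E] [NormedSpace ℝ E]
    [NormedAddCommGroup F] [NormedSpace ℝ F] {f g : F → E} {z w : F}
    (hf : DifferentiableAt ℝ f z) (hg : DifferentiableAt ℝ g z)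
    (h : (fun s : ℝ => f (z + s • w)) =ᶠ[nhds 0] fun s => g (z + s • w)) :
    fderiv ℝ f z w = fderiv ℝ g z w := by
  rw [← hf.lineDeriv_eq_fderiv, ← hg.lineDeriv_eq_fderiv]
  exact h.deriv_eq

/-- The first time derivative of the difference `u − v_τ` at `(x̄, ȳ, tₙ)` equals
`−(τ/2)·[ (DA(u₀)[A(u₀)uₓ + B(u₀)u_y]) uₓ + (DB(u₀)[A(u₀)uₓ + B(u₀)u_y]) u_y ] + O(τ²)`. -/
theorem time_derivative_difference_first_order
    (m : ℕ) (hm : 0 < m)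
    (A B : (Fin m → ℝ) → (Fin m → Fin m → ℝ))
    (hA : ContDiff ℝ 2 A) (hB : ContDiff ℝ 2 B)
    (u : ℝ × ℝ × ℝ → (Fin m → ℝ))
    (xb yb tn τ₀ : ℝ) (hτ₀ : 0 < τ₀)
    -- u is C² on a neighbourhood of (xb, yb, tn) and solves the quasilinear system there
    (Ω : Set (ℝ × ℝ × ℝ)) (hΩ : IsOpen Ω) (hz₀ : (xb, yb, tn) ∈ Ω)
    (hu : ContDiffOn ℝ 2 u Ω)
    (hupde : ∀ z ∈ Ω, pdt u z + mvec (A (u z)) (pdx u z) + mvec (B (u z)) (pdy u z) = 0)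
    -- the family v_τ of C¹ solutions of the constant-coefficient linearised systems
    (V : ℝ → ℝ × ℝ × ℝ → (Fin m → ℝ))
    (Ω' : Set (ℝ × ℝ × ℝ)) (hΩ' : IsOpen Ω') (hz₀' : (xb, yb, tn) ∈ Ω')
    (hV : ∀ τ ∈ Set.Ioc 0 τ₀, ContDiffOn ℝ 1 (V τ) Ω')
    (hVpde : ∀ τ ∈ Set.Ioc 0 τ₀, ∀ z ∈ Ω',
      pdt (V τ) z + mvec (A (u (xb, yb, tn + τ / 2))) (pdx (V τ) z)
        + mvec (B (u (xb, yb, tn + τ / 2))) (pdy (V τ) z) = 0)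
    -- v_τ agrees with u at time tn on a spatial neighbourhood of (xb, yb)
    (U : Set (ℝ × ℝ)) (hU : IsOpen U) (hxyU : (xb, yb) ∈ U)
    (hinit : ∀ τ ∈ Set.Ioc 0 τ₀, ∀ xy ∈ U, V τ (xy.1, xy.2, tn) = u (xy.1, xy.2, tn)) :
    ∃ C > (0:ℝ), ∃ τ₁ ∈ Set.Ioc 0 τ₀, ∀ τ ∈ Set.Ioc 0 τ₁,
      ‖pdt (fun z => u z - V τ z) (xb, yb, tn) -
        (-(τ / 2) • (
          mvec (fderiv ℝ A (u (xb, yb, tn))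
              (mvec (A (u (xb, yb, tn))) (pdx u (xb, yb, tn))
                + mvec (B (u (xb, yb, tn))) (pdy u (xb, yb, tn))))
            (pdx u (xb, yb, tn))
          + mvec (fderiv ℝ B (u (xb, yb, tn))
              (mvec (A (u (xb, yb, tn))) (pdx u (xb, yb, tn))
                + mvec (B (u (xb, yb, tn))) (pdy u (xb, yb, tn))))
            (pdy u (xb, yb, tn))))‖ ≤ C * τ ^ 2 := by
  set z₀ : ℝ × ℝ × ℝ := (xb, yb, tn) with hz₀_def
  set ux := pdx u z₀ with hux
  set uy := pdy u z₀ with huy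
  have hu₂ : ContDiffAt ℝ 2 u z₀ := hu.contDiffAt (hΩ.mem_nhds hz₀)
  have hu₁ : DifferentiableAt ℝ u z₀ := hu₂.differentiableAt (by norm_num)
  have hV₁ : ∀ τ ∈ Set.Ioc 0 τ₀, DifferentiableAt ℝ (V τ) z₀ := fun τ hτ =>
    ((hV τ hτ).contDiffAt (hΩ'.mem_nhds hz₀')).differentiableAt (by norm_num)
  have hVx : ∀ τ ∈ Set.Ioc 0 τ₀, pdx (V τ) z₀ = ux := fun τ hτ => by
    refine fderiv_apply_eq_of_line (hV₁ τ hτ) hu₁ ?_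
    have hc : ContinuousAt (fun s : ℝ => (xb + s, yb)) 0 := by fun_prop
    filter_upwards [hc.preimage_mem_nhds (hU.mem_nhds (by simpa using hxyU))] with s hs
    simpa [hz₀_def] using hinit τ hτ _ hs
  have hVy : ∀ τ ∈ Set.Ioc 0 τ₀, pdy (V τ) z₀ = uy := fun τ hτ => by
    refine fderiv_apply_eq_of_line (hV₁ τ hτ) hu₁ ?_
    have hc : ContinuousAt (fun s : ℝ => (xb, yb + s)) 0 := by fun_prop
    filter_upwards [hc.preimage_mem_nhds (hU.mem_nhds (by simpa using hxyU))] with s hs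
    simpa [hz₀_def] using hinit τ hτ _ hs
  set W := mvec (A (u z₀)) ux + mvec (B (u z₀)) uy with hW
  have hut : pdt u z₀ = -W := by
    have := hupde z₀ hz₀
    rw [add_assoc] at this
    exact eq_neg_of_add_eq_zero_left this
  have hline0 : ((xb, yb, tn + (0:ℝ)) : ℝ × ℝ × ℝ) = z₀ := by simp [hz₀_def]
  have hline : HasDerivAt (fun s : ℝ => ((xb, yb, tn + s) : ℝ × ℝ × ℝ)) (0, 0, 1) 0 :=
    (hasDerivAt_const _ _).prodMk ((hasDerivAt_const _ _).prodMk ((hasDerivAt_id _).const_add tn))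
  have hg : HasDerivAt (fun s : ℝ => u (xb, yb, tn + s)) (-W) 0 := by
    rw [← hut]
    have h : HasFDerivAt u (fderiv ℝ u z₀) ((xb, yb, tn + (0:ℝ)) : ℝ × ℝ × ℝ) := by
      rw [hline0]; exact hu₁.hasFDerivAt
    exact h.comp_hasDerivAt 0 hline
  have hgC : ContDiffAt ℝ 2 (fun s : ℝ => u (xb, yb, tn + s)) 0 := by
    have h : ContDiffAt ℝ 2 u ((xb, yb, tn + (0:ℝ)) : ℝ × ℝ × ℝ) := by rwa [hline0]
    exact h.comp (0:ℝ) (f := fun s : ℝ => ((xb, yb, tn + s) : ℝ × ℝ × ℝ)) (by fun_prop)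
  have hcomp : ∀ M : (Fin m → ℝ) → (Fin m → Fin m → ℝ), ContDiff ℝ 2 M →
      HasDerivAt (fun s : ℝ => M (u (xb, yb, tn + s))) (-(fderiv ℝ M (u z₀) W)) 0 := by
    intro M hM
    have h : HasFDerivAt M (fderiv ℝ M (u z₀)) (u (xb, yb, tn + (0:ℝ))) := by
      rw [hline0]; exact (hM.differentiable (by norm_num) _).hasFDerivAt
    rw [← map_neg]
    exact h.comp_hasDerivAt 0 hg
  obtain ⟨C, hC, δ, hδ, hT⟩ := taylor_one_right
    ((contDiffAt_mvec (hA.contDiffAt.comp 0 hgC) ux).add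
      (contDiffAt_mvec (hB.contDiffAt.comp 0 hgC) uy))
    ((hasDerivAt_mvec (hcomp A hA) ux).add (hasDerivAt_mvec (hcomp B hB) uy))
  refine ⟨C, hC, min τ₀ δ, ⟨lt_min hτ₀ hδ, min_le_left _ _⟩, fun τ hτ => ?_⟩
  have hτ' : τ ∈ Set.Ioc 0 τ₀ := ⟨hτ.1, hτ.2.trans (min_le_left _ _)⟩
  have hτδ : τ ≤ δ := hτ.2.trans (min_le_right _ _)
  have hVt := hVpde τ hτ' z₀ hz₀'
  rw [hVx τ hτ', hVy τ hτ', add_assoc] at hVt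
  have hdiff : pdt (fun z => u z - V τ z) z₀ = pdt u z₀ - pdt (V τ) z₀ := by
    simp only [pdt]
    rw [fderiv_fun_sub hu₁ (hV₁ τ hτ')]
    rfl
  have h := hT (τ / 2) ⟨by linarith [hτ.1], by linarith [hτ.1]⟩
  simp only [Function.comp_apply, mvec_neg, hline0] at h
  rw [hdiff, hut, eq_neg_of_add_eq_zero_left hVt]
  -- The left side is now exactly the Taylor remainder of
  -- `s ↦ A(u(xb, yb, tn + s)) ux + B(u(xb, yb, tn + s)) uy` at `s = τ / 2`.
  refine le_trans (le_of_eq ?_) (h.trans ?_)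
  · congr 1
    simp only [hW]
    module
  · have := hτ.1
    gcongr <;> linarith
end
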